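/- Let T be a reversible two-way Büchi transducer with n states. Then there exists a reversible two-way transducer S with no acceptance condition and at most 3n states such that ⟦S⟧ = ⟦T⟧ as partial functions from A^ω to B^ω. -/

import Mathlib

namespace Paper

/-! ## Two-way parity automata and transducers over infinite words.

An infinite word over an alphabet `A` is a function `ℕ → A`.
A configuration `⊢ u p v` with `w = u v` is encoded as a pair `(p, |u|) : Q × ℕ`.
The left end-marker `⊢` is encoded as `(none : Option A)`. -/

/-- A two-way automaton (without acceptance condition): states `Q` partitioned into forward
states (`fwd`) and backward states, an initial forward state, and a transition relation `Δ`
over `Q × (A ∪ {⊢}) × Q` where transitions on the end-marker `⊢` (encoded `none`) go from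
backward to forward states. -/
structure TwoWayAut (A : Type) where
  Q : Type
  finQ : Fintype Q
  fwd : Q → Prop
  init : Q
  init_fwd : fwd init
  Δ : Set (Q × Option A × Q)
  marker : ∀ p q, (p, (none : Option A), q) ∈ Δ → ¬ fwd p ∧ fwd q

attribute [instance] TwoWayAut.finQ

variable {A B : Type}

/-- `StepVia M w c t c'` : from configuration `c`, using transition `t`, the automaton `M`
reaches the successor configuration `c'` on input word `w`. -/
def StepVia (M : TwoWayAut A) (w : ℕ → A) (c : M.Q × ℕ)
    (t : M.Q × Option A × M.Q) (c' : M.Q × ℕ) : Prop :=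
  t ∈ M.Δ ∧ t.1 = c.1 ∧ t.2.2 = c'.1 ∧
    ((M.fwd c.1 ∧ t.2.1 = some (w c.2) ∧
        ((M.fwd c'.1 ∧ c'.2 = c.2 + 1) ∨ (¬ M.fwd c'.1 ∧ c'.2 = c.2))) ∨
     (¬ M.fwd c.1 ∧ 0 < c.2 ∧ t.2.1 = some (w (c.2 - 1)) ∧
        ((M.fwd c'.1 ∧ c'.2 = c.2) ∨ (¬ M.fwd c'.1 ∧ c'.2 = c.2 - 1))) ∨
     (¬ M.fwd c.1 ∧ c.2 = 0 ∧ t.2.1 = none ∧ c'.2 = 0))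

/-- The successor relation on configurations. -/
def Step (M : TwoWayAut A) (w : ℕ → A) (c c' : M.Q × ℕ) : Prop :=
  ∃ t, StepVia M w c t c'

/-- An infinite run of `M` on `w`, given by its configurations and the transitions taken. -/
def IsRun (M : TwoWayAut A) (w : ℕ → A) (cfg : ℕ → M.Q × ℕ)
    (tr : ℕ → M.Q × Option A × M.Q) : Prop :=
  cfg 0 = (M.init, 0) ∧ ∀ i, StepVia M w (cfg i) (tr i) (cfg (i + 1))

/-- The run reads the whole word: the prefix lengths are unbounded. -/
def ReadsWhole (M : TwoWayAut A) (cfg : ℕ → M.Q × ℕ) : Prop :=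
  ∀ n : ℕ, ∃ i, n ≤ (cfg i).2

/-- `t` occurs infinitely often in the sequence `tr`. -/
def InfOften {T : Type} (tr : ℕ → T) (t : T) : Prop :=
  ∀ n, ∃ i, n ≤ i ∧ tr i = t

def Deterministic (M : TwoWayAut A) : Prop :=
  ∀ p a q q', (p, a, q) ∈ M.Δ → (p, a, q') ∈ M.Δ → q = q'

def Codeterministic (M : TwoWayAut A) : Prop :=
  ∀ p p' a q, (p, a, q) ∈ M.Δ → (p', a, q) ∈ M.Δ → p = p'

def Reversible (M : TwoWayAut A) : Prop :=
  Deterministic M ∧ Codeterministic M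

def Oneway (M : TwoWayAut A) : Prop := ∀ q, M.fwd q

/-- A two-way parity automaton: a two-way automaton together with a finite family of
coloring functions (indexed by `CIdx`). -/
structure ParityAut (A : Type) extends TwoWayAut A where
  CIdx : Type
  finC : Fintype CIdx
  color : CIdx → (Q × Option A × Q) → ℕ

attribute [instance] ParityAut.finC

/-- The parity acceptance condition: for every coloring function, the minimal color of the
transitions taken infinitely often is even. -/
def ParityCond (M : ParityAut A) (tr : ℕ → M.Q × Option A × M.Q) : Prop :=
  ∀ c : M.CIdx, Even (sInf {m : ℕ | ∃ t, InfOften tr t ∧ M.color c t = m})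

/-- Acceptance of an infinite word by a two-way parity automaton. -/
def ParityAut.Accepts (M : ParityAut A) (w : ℕ → A) : Prop :=
  ∃ cfg tr, IsRun M.toTwoWayAut w cfg tr ∧ ReadsWhole M.toTwoWayAut cfg ∧ ParityCond M tr

/-- All colors of `M` (on its transitions) belong to `{0, …, ℓ-1}`. -/
def ColorsLt (M : ParityAut A) (ℓ : ℕ) : Prop :=
  ∀ (c : M.CIdx) t, t ∈ M.Δ → M.color c t < ℓ

/-- `l` is a prefix of the infinite word `x`. -/
def IsPrefixOf {C : Type} (l : List C) (x : ℕ → C) : Prop :=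
  ∀ (i : ℕ) (h : i < l.length), l.get ⟨i, h⟩ = x i

/-- Concatenation of the first `n` words of a sequence of finite words. -/
def prefixCat {C : Type} (f : ℕ → List C) : ℕ → List C
  | 0 => []
  | n + 1 => prefixCat f n ++ f n

/-- The concatenation of the sequence of finite words `f` is the infinite word `x`. -/
def FlattenTo {C : Type} (f : ℕ → List C) (x : ℕ → C) : Prop :=
  (∀ n, IsPrefixOf (prefixCat f n) x) ∧ ∀ m, ∃ n, m ≤ (prefixCat f n).length

/-- A two-way parity transducer: a two-way parity automaton (whose underlying automaton is
required to be deterministic via hypotheses) together with an output function. -/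
structure TwoWayTrans (A B : Type) extends ParityAut A where
  out : (Q × Option A × Q) → List B

/-- `T.Realizes w x` : the word `w` is accepted by (the deterministic transducer) `T`,
the produced output is infinite and equals `x`.  This is the graph of the partial function
`⟦T⟧ : A^ω ⇀ B^ω`. -/
def TwoWayTrans.Realizes (T : TwoWayTrans A B) (w : ℕ → A) (x : ℕ → B) : Prop :=
  ∃ cfg tr, IsRun T.toTwoWayAut w cfg tr ∧ ReadsWhole T.toTwoWayAut cfg ∧
    ParityCond T.toParityAut tr ∧ FlattenTo (fun i => T.out (tr i)) x

/-- A two-way Büchi transducer: accepting transitions `acc` instead of coloring functions. -/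
structure BuchiTrans (A B : Type) extends TwoWayAut A where
  acc : Set (Q × Option A × Q)
  out : (Q × Option A × Q) → List B

def BuchiTrans.Realizes (T : BuchiTrans A B) (w : ℕ → A) (x : ℕ → B) : Prop :=
  ∃ cfg tr, IsRun T.toTwoWayAut w cfg tr ∧ ReadsWhole T.toTwoWayAut cfg ∧
    (∀ n, ∃ i, n ≤ i ∧ tr i ∈ T.acc) ∧ FlattenTo (fun i => T.out (tr i)) x

/-- A two-way transducer with no acceptance condition. -/
structure NoAccTrans (A B : Type) extends TwoWayAut A where
  out : (Q × Option A × Q) → List B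

def NoAccTrans.Realizes (T : NoAccTrans A B) (w : ℕ → A) (x : ℕ → B) : Prop :=
  ∃ cfg tr, IsRun T.toTwoWayAut w cfg tr ∧ ReadsWhole T.toTwoWayAut cfg ∧
    FlattenTo (fun i => T.out (tr i)) x

/-! ## One-way parity automata, transducers, and copyless parity streaming string
transducers.  A one-way automaton has only forward states and never reads the end-marker,
so we use a simplified (equivalent) presentation. -/

structure OnewayAut (A : Type) where
  Q : Type
  finQ : Fintype Q
  init : Q
  Δ : Set (Q × A × Q)
  CIdx : Type
  finC : Fintype CIdx
  color : CIdx → (Q × A × Q) → ℕ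

attribute [instance] OnewayAut.finQ
attribute [instance] OnewayAut.finC

def OnewayDet (M : OnewayAut A) : Prop :=
  ∀ p a q q', (p, a, q) ∈ M.Δ → (p, a, q') ∈ M.Δ → q = q'

def OnewayRun (M : OnewayAut A) (w : ℕ → A) (s : ℕ → M.Q) : Prop :=
  s 0 = M.init ∧ ∀ i, (s i, w i, s (i + 1)) ∈ M.Δ

def OnewayParityCond (M : OnewayAut A) (tr : ℕ → M.Q × A × M.Q) : Prop :=
  ∀ c : M.CIdx, Even (sInf {m : ℕ | ∃ t, InfOften tr t ∧ M.color c t = m})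

def OnewayAut.Accepts (M : OnewayAut A) (w : ℕ → A) : Prop :=
  ∃ s, OnewayRun M w s ∧ OnewayParityCond M (fun i => (s i, w i, s (i + 1)))

def OnewayColorsLt (M : OnewayAut A) (ℓ : ℕ) : Prop :=
  ∀ (c : M.CIdx) t, t ∈ M.Δ → M.color c t < ℓ

/-- A one-way (deterministic) parity transducer. -/
structure OnewayTrans (A B : Type) extends OnewayAut A where
  out : (Q × A × Q) → List B

def OnewayTrans.Realizes (T : OnewayTrans A B) (w : ℕ → A) (x : ℕ → B) : Prop :=
  ∃ s, OnewayRun T.toOnewayAut w s ∧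
    OnewayParityCond T.toOnewayAut (fun i => (s i, w i, s (i + 1))) ∧
    FlattenTo (fun i => T.out (s i, w i, s (i + 1))) x

/-- Number of occurrences of `a` in the list `l` (classically). -/
noncomputable def occ {C : Type} (a : C) (l : List C) : ℕ :=
  l.countP fun x => @decide (x = a) (Classical.propDecidable _)

/-- A substitution `σ : R → (R ⊎ B)*` is copyless if every register occurs at most once in
the concatenation of all the `σ r'`. -/
def Copyless {R C : Type} [Fintype R] (σ : R → List (R ⊕ C)) : Prop :=
  ∀ r : R, (∑ r' : R, occ (Sum.inl r) (σ r')) ≤ 1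

/-- Applying an assignment `ν : R → B*` (extended to a morphism `(R ⊎ B)* → B*`). -/
def subApply {R C : Type} (ν : R → List C) : List (R ⊕ C) → List C
  | [] => []
  | Sum.inl r :: l => ν r ++ subApply ν l
  | Sum.inr b :: l => b :: subApply ν l

/-- A copyless parity streaming string transducer: a (deterministic) one-way parity
automaton with a finite set `R` of registers, a distinguished output register, and copyless
register updates, where the update of `outReg` always starts with `outReg`. -/
structure CPSST (A B : Type) extends OnewayAut A where
  R : Type
  finR : Fintype R
  outReg : R
  upd : (Q × A × Q) → R → List (R ⊕ B)
  copyless : ∀ t, @Copyless R B finR (upd t)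
  out_form : ∀ t, ∃ γ, upd t outReg = Sum.inl outReg :: γ

attribute [instance] CPSST.finR

/-- The register contents along a run: `ν_0 r = ε` and `ν_{i+1} = ν_i ∘ λ(t_i)`. -/
def regVal (T : CPSST A B) (w : ℕ → A) (s : ℕ → T.Q) : ℕ → T.R → List B
  | 0 => fun _ => []
  | i + 1 => fun r => subApply (regVal T w s i) (T.upd (s i, w i, s (i + 1)) r)

/-- `T.Realizes w x` : the (deterministic) CPSST `T` has an accepting run on `w` whose
output-register contents are unbounded with limit `x`. -/
def CPSST.Realizes (T : CPSST A B) (w : ℕ → A) (x : ℕ → B) : Prop :=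
  ∃ s, OnewayRun T.toOnewayAut w s ∧
    OnewayParityCond T.toOnewayAut (fun i => (s i, w i, s (i + 1))) ∧
    (∀ i, IsPrefixOf (regVal T w s i T.outReg) x) ∧
    (∀ m, ∃ i, m ≤ (regVal T w s i T.outReg).length)

/-- The one-way parity transducer with the same underlying automaton as the CPSST `T`,
which outputs on each transition the (copyless) substitution that `T` applies. -/
def enrich (T : CPSST A B) :
    OnewayTrans A {σ : T.R → List (T.R ⊕ B) // Copyless σ} where
  toOnewayAut := T.toOnewayAut
  out := fun t => [⟨T.upd t, T.copyless t⟩]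

/-! ## Merging forests -/

/-- A merging forest on `(Q⁺ ⊎ Q⁻, χ, ℓ)`: a finite rooted forest (given by a `parent` map
with no cycles) whose leaves (childless nodes) are injectively labeled in `Q⁻` and carry a
`χ`-tuple of integers `< ℓ`, whose roots are injectively labeled in `Q⁺`, and in which every
unary node (exactly one child) is a root. -/
structure MForest (Qp Qm χ : Type) (ℓ : ℕ) where
  V : Type
  finV : Fintype V
  parent : V → Option V
  acyc : ∀ v : V, ¬ Relation.TransGen (fun a b => parent a = some b) v v
  leafLab : V → Qm
  rootLab : V → Qp
  tup : V → χ → ℕ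
  tup_lt : ∀ v, (∀ u, parent u ≠ some v) → ∀ c, tup v c < ℓ
  leaf_inj : ∀ u v, (∀ u', parent u' ≠ some u) → (∀ v', parent v' ≠ some v) →
    leafLab u = leafLab v → u = v
  root_inj : ∀ u v, parent u = none → parent v = none → rootLab u = rootLab v → u = v
  unary_root : ∀ v : V, (∃! u, parent u = some v) → parent v = none

attribute [instance] MForest.finV

/-- Isomorphism of merging forests: a bijection of the nodes commuting with `parent` and
preserving the leaf labels, the leaf tuples and the root labels. -/
def MFIso {Qp Qm χ : Type} {ℓ : ℕ} (F G : MForest Qp Qm χ ℓ) : Prop :=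
  ∃ e : F.V ≃ G.V,
    (∀ v, G.parent (e v) = Option.map e (F.parent v)) ∧
    (∀ v, (∀ u, F.parent u ≠ some v) →
      F.leafLab v = G.leafLab (e v) ∧ ∀ c, F.tup v c = G.tup (e v) c) ∧
    (∀ v, F.parent v = none → F.rootLab v = G.rootLab (e v))

end Paper

namespace Paper


open Classical in
/-- Abstract machine on (index in the run of `T`, mode, number of emitted outputs).
Mode `0` searches, mode `1` rewinds, mode `2` outputs. -/
noncomputable def nxt (P : ℕ → Prop) (s : ℕ × Fin 3 × ℕ) : ℕ × Fin 3 × ℕ :=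
  if s.2.1 = 0 then (if P s.1 then (s.1, 1, s.2.2) else (s.1 + 1, 0, s.2.2))
  else if s.2.1 = 1 then
    (if s.1 = 0 ∨ P (s.1 - 1) then (s.1, 2, s.2.2) else (s.1 - 1, 1, s.2.2))
  else (if P s.1 then (s.1 + 1, 0, s.2.2 + 1) else (s.1 + 1, 2, s.2.2 + 1))

noncomputable def st (P : ℕ → Prop) : ℕ → ℕ × Fin 3 × ℕ
  | 0 => (0, 0, 0)
  | j + 1 => nxt P (st P j)

def Inv (P : ℕ → Prop) (s : ℕ × Fin 3 × ℕ) : Prop :=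
  s.2.2 ≤ s.1 ∧
  (s.2.1 ≠ 2 → (∀ i, s.2.2 ≤ i → i < s.1 → ¬ P i) ∧ (s.2.2 = 0 ∨ P (s.2.2 - 1))) ∧
  (s.2.1 = 2 → s.2.2 = s.1) ∧ (s.2.1 ≠ 0 → ∃ L, s.1 ≤ L ∧ P L)

theorem inv_nxt (P : ℕ → Prop) (s : ℕ × Fin 3 × ℕ) (h : Inv P s) : Inv P (nxt P s) := by
  obtain ⟨k, m, o⟩ := s
  obtain ⟨h1, h2, h3, h4⟩ := h
  simp only at h1 h2 h3 h4
  fin_cases m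
  · by_cases hP : P k
    · simp [nxt, hP, Inv]
      simp at h2
      exact ⟨h1, h2, k, le_rfl, hP⟩
    · simp [nxt, hP, Inv]
      simp at h2
      refine ⟨by omega, fun i hi hk => ?_, h2.2⟩
      by_cases hik : i = k
      · subst hik; exact hP
      · exact h2.1 i hi (by omega)
  · simp at h2 h4
    obtain ⟨L, hL, hPL⟩ := h4
    by_cases hP : k = 0 ∨ P (k - 1)
    · simp only [nxt, hP, Inv]
      simp
      refine ⟨h1, ?_, L, hL, hPL⟩
      by_contra hne
      rcases hP with hP | hP
      · omega
      · exact h2.1 (k-1) (by omega) (by omega) hP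
    · simp only [nxt, hP, Inv]
      simp
      push Not at hP
      have : o ≠ k := by
        rintro rfl
        rcases h2.2 with h | h
        · exact hP.1 h
        · exact hP.2 h
      exact ⟨by omega, ⟨fun i hi hk => h2.1 i hi (by omega), h2.2⟩, L, by omega, hPL⟩
  · simp at h3 h4
    obtain ⟨L, hL, hPL⟩ := h4
    subst h3
    by_cases hP : P o
    · simp [nxt, hP, Inv]
      intro i hi hk; omega
    · simp [nxt, hP, Inv]
      refine ⟨L, ?_, hPL⟩
      have : o ≠ L := by rintro rfl; exact hP hPL
      omega

theorem inv_st (P : ℕ → Prop) (j : ℕ) : Inv P (st P j) := by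
  induction j with
  | zero => simp [st, Inv]
  | succ j ih => exact inv_nxt P _ ih

/-- If `P` stops holding, the number of outputs is bounded. -/
theorem st_bdd (P : ℕ → Prop) (N : ℕ) (hN : ∀ i, N ≤ i → ¬ P i) (j : ℕ) :
    (st P j).2.2 ≤ N := by
  obtain ⟨h1, h2, h3, h4⟩ := inv_st P j
  by_contra hc
  push Not at hc
  by_cases hm : (st P j).2.1 = 2
  · obtain ⟨L, hL, hPL⟩ := h4 (by rw [hm]; decide)
    exact hN L (by omega) hPL
  · rcases (h2 hm).2 with h | h
    · omega
    · exact hN _ (by omega) h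

theorem st_cat {C : Type} (P : ℕ → Prop) (g h : ℕ → List C)
    (hh : ∀ j, h j = if (st P j).2.1 = 2 then g (st P j).1 else []) (j : ℕ) :
    prefixCat h j = prefixCat g (st P j).2.2 := by
  induction j with
  | zero => rfl
  | succ j ih =>
    obtain ⟨-, -, h3, -⟩ := inv_st P j
    rw [prefixCat, ih, hh, st]
    generalize st P j = s at *
    obtain ⟨k, m, o⟩ := s
    fin_cases m
    · by_cases hP : P k <;> simp [nxt, hP]
    · by_cases hP : k = 0 ∨ P (k - 1) <;> simp only [nxt, hP] <;> simp
    · simp at h3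
      subst h3
      by_cases hP : P o <;> simp [nxt, hP, prefixCat]

theorem st_rewind (P : ℕ → Prop) (o : ℕ) (ho : o = 0 ∨ P (o - 1)) (d : ℕ) :
    ∀ j, st P j = (o + d, 1, o) → (∀ i, o ≤ i → i < o + d → ¬ P i) →
      ∃ j', st P j' = (o, 2, o) := by
  induction d with
  | zero =>
    intro j hj _
    refine ⟨j + 1, ?_⟩
    rw [st, hj]
    simp only [nxt, Nat.add_zero, ho]
    simp
  | succ d ih =>
    intro j hj hn
    have := hn (o + d) (by omega) (by omega)
    refine ih (j + 1) ?_ (fun i h1 h2 => hn i h1 (by omega))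
    rw [st, hj]
    have h2 : ¬ (o + (d + 1) = 0 ∨ P (o + (d + 1) - 1)) := by
      rintro (h | h)
      · omega
      · exact this h
    simp only [nxt, h2]
    simp
    try omega

theorem st_search (P : ℕ → Prop) (o : ℕ) (ho : o = 0 ∨ P (o - 1)) (d : ℕ) :
    ∀ j a, st P j = (a, 0, o) → o ≤ a → (∀ i, o ≤ i → i < a → ¬ P i) → P (a + d) →
      ∃ j', st P j' = (o, 2, o) := by
  induction d with
  | zero =>
    intro j a hj hoa hn hP
    refine st_rewind P o ho (a - o) (j + 1) ?_ (fun i h1 h2 => hn i h1 (by omega))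
    rw [st, hj]
    simp at hP
    simp [nxt, hP]
    try omega
  | succ d ih =>
    intro j a hj hoa hn hP
    by_cases hPa : P a
    · refine st_rewind P o ho (a - o) (j + 1) ?_ (fun i h1 h2 => hn i h1 (by omega))
      rw [st, hj]
      simp [nxt, hPa]
      omega
    · refine ih (j + 1) (a + 1) ?_ (by omega) ?_ (by rw [Nat.add_assoc, Nat.add_comm 1]; exact hP)
      · rw [st, hj]
        simp [nxt, hPa]
      · intro i h1 h2
        by_cases hi : i = a
        · subst hi; exact hPa
        · exact hn i h1 (by omega)

theorem st_reach (P : ℕ → Prop) (hP : ∀ n, ∃ i, n ≤ i ∧ P i) (n : ℕ) :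
    ∃ j, st P j = (n, 2, n) := by
  induction n with
  | zero =>
    obtain ⟨i, -, hi⟩ := hP 0
    exact st_search P 0 (Or.inl rfl) i 0 0 rfl le_rfl (fun i _ h => by omega) (by simpa using hi)
  | succ n ih =>
    obtain ⟨j, hj⟩ := ih
    by_cases h : P n
    · obtain ⟨i, hi, hPi⟩ := hP (n + 1)
      refine st_search P (n + 1) (Or.inr h) (i - (n + 1)) (j + 1) (n + 1) ?_ le_rfl
        (fun i _ h => by omega) (by rwa [Nat.add_sub_cancel' hi])
      rw [st, hj]
      simp [nxt, h]
    · refine ⟨j + 1, ?_⟩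
      rw [st, hj]
      simp [nxt, h]

theorem prefixCat_mono {C : Type} (g : ℕ → List C) {a b : ℕ} (h : a ≤ b) :
    (prefixCat g a).length ≤ (prefixCat g b).length := by
  induction b, h using Nat.le_induction with
  | base => exact le_rfl
  | succ b _ ih => rw [prefixCat, List.length_append]; omega

section machine
variable {A B : Type}

theorem stepVia_det {M : TwoWayAut A} (hd : Deterministic M) {w : ℕ → A} {c c1 c2 : M.Q × ℕ}
    {t1 t2 : M.Q × Option A × M.Q} (h1 : StepVia M w c t1 c1) (h2 : StepVia M w c t2 c2) :
    t1 = t2 ∧ c1 = c2 := by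
  obtain ⟨p1, a1, q1⟩ := t1
  obtain ⟨p2, a2, q2⟩ := t2
  obtain ⟨c11, c12⟩ := c1
  obtain ⟨c21, c22⟩ := c2
  obtain ⟨m1, e1, f1, r1⟩ := h1
  obtain ⟨m2, e2, f2, r2⟩ := h2
  simp only at e1 f1 r1 e2 f2 r2
  subst e1 f1 e2 f2
  have ha : a1 = a2 := by
    rcases r1 with ⟨x, y, _⟩ | ⟨x, x', y, _⟩ | ⟨x, x', y, _⟩ <;>
    rcases r2 with ⟨z, u, _⟩ | ⟨z, z', u, _⟩ | ⟨z, z', u, _⟩ <;>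
    first | (exact absurd z x) | (exact absurd x z) | omega | (rw [y, u])
  subst ha
  have hq := hd _ _ _ _ m1 m2
  subst hq
  refine ⟨rfl, ?_⟩
  congr 1
  rcases r1 with ⟨x, y, r⟩ | ⟨x, x', y, r⟩ | ⟨x, x', y, r⟩ <;>
  rcases r2 with ⟨z, u, s⟩ | ⟨z, z', u, s⟩ | ⟨z, z', u, s⟩ <;>
  first | (exact absurd z x) | (exact absurd x z) | grind

/-- The letter read by the head in configuration `c` is `a`. -/
def Reads (fw : Prop) (w : ℕ → A) (i : ℕ) (a : Option A) : Prop :=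
  (fw ∧ a = some (w i)) ∨ (¬ fw ∧ 0 < i ∧ a = some (w (i - 1))) ∨ (¬ fw ∧ i = 0 ∧ a = none)

theorem StepVia.reads {M : TwoWayAut A} {w : ℕ → A} {c c' : M.Q × ℕ}
    {t : M.Q × Option A × M.Q} (h : StepVia M w c t c') : Reads (M.fwd c.1) w c.2 t.2.1 := by
  obtain ⟨-, -, -, h⟩ := h
  unfold Reads
  tauto

theorem Reads.step {M : TwoWayAut A} {w : ℕ → A} {c : M.Q × ℕ} {a : Option A} {q : M.Q}
    (h : Reads (M.fwd c.1) w c.2 a) (hq : (c.1, a, q) ∈ M.Δ) :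
    ∃ c', StepVia M w c (c.1, a, q) c' := by
  by_cases hf : M.fwd q
  · rcases h with ⟨h1, h2⟩ | ⟨h1, h2, h3⟩ | ⟨h1, h2, h3⟩
    · exact ⟨(q, c.2 + 1), hq, rfl, rfl, by simp [h1, h2, hf]⟩
    · exact ⟨(q, c.2), hq, rfl, rfl, by simp [h1, h2, hf, h3]⟩
    · exact ⟨(q, 0), hq, rfl, rfl, by simp [h1, h2, h3]⟩
  · rcases h with ⟨h1, h2⟩ | ⟨h1, h2, h3⟩ | ⟨h1, h2, h3⟩
    · exact ⟨(q, c.2), hq, rfl, rfl, by simp [h1, h2, hf]⟩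
    · exact ⟨(q, c.2 - 1), hq, rfl, rfl, by simp [h1, h2, hf, h3]⟩
    · exact ⟨(q, 0), hq, rfl, rfl, by simp [h1, h2, h3]⟩

inductive SD (T : BuchiTrans A B) : T.Q × Fin 3 → Option A → T.Q × Fin 3 → Prop
  | ss {p a q} : (p, a, q) ∈ T.Δ → (p, a, q) ∉ T.acc → SD T (p, 0) a (q, 0)
  | sr {p a q} : (p, a, q) ∈ T.Δ → (p, a, q) ∈ T.acc → SD T (p, 0) a (p, 1)
  | rr {p a q} : (p, a, q) ∈ T.Δ → (p, a, q) ∉ T.acc → SD T (q, 1) a (p, 1)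
  | ro {p a q} : (p, a, q) ∈ T.Δ → (p, a, q) ∈ T.acc → SD T (q, 1) a (q, 2)
  | ri : SD T (T.init, 1) none (T.init, 2)
  | oo {p a q} : (p, a, q) ∈ T.Δ → (p, a, q) ∉ T.acc → SD T (p, 2) a (q, 2)
  | os {p a q} : (p, a, q) ∈ T.Δ → (p, a, q) ∈ T.acc → SD T (p, 2) a (q, 0)

/-- The transducer without acceptance condition. -/
def mkS (T : BuchiTrans A B) : NoAccTrans A B where
  Q := T.Q × Fin 3
  finQ := inferInstance
  fwd := fun s => if s.2 = 1 then ¬ T.fwd s.1 else T.fwd s.1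
  init := (T.init, 0)
  init_fwd := by simpa using T.init_fwd
  Δ := {t | SD T t.1 t.2.1 t.2.2}
  marker := by
    intro p q h
    have hm := T.marker
    have hi := T.init_fwd
    simp only [Set.mem_setOf_eq] at h
    cases h <;> simp <;> grind
  out := fun t => if t.1.2 = 2 then T.out (t.1.1, t.2.1, t.2.2.1) else []

theorem mkS_rev (T : BuchiTrans A B) (hrev : Reversible T.toTwoWayAut)
    (hinit : ∀ p, (p, none, T.init) ∉ T.Δ) : Reversible (mkS T).toTwoWayAut := by
  obtain ⟨hd, hc⟩ := hrev
  constructor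
  · intro p a q q' h1 h2
    change SD T p a q at h1
    change SD T p a q' at h2
    cases h1 <;> cases h2 <;> grind [Deterministic, Codeterministic]
  · intro p p' a q h1 h2
    change SD T p a q at h1
    change SD T p' a q at h2
    cases h1 <;> cases h2 <;> grind [Deterministic, Codeterministic]

/-- Encoding of abstract states as configurations of `mkS T`. -/
def enc (T : BuchiTrans A B) (cfg : ℕ → T.Q × ℕ) (s : ℕ × Fin 3 × ℕ) : (mkS T).Q × ℕ :=
  (((cfg s.1).1, s.2.1), (cfg s.1).2)

theorem enc_step (T : BuchiTrans A B) (w : ℕ → A) (cfg : ℕ → T.Q × ℕ)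
    (tr : ℕ → T.Q × Option A × T.Q) (h0 : cfg 0 = (T.init, 0)) (s : ℕ × Fin 3 × ℕ)
    (hv1 : s.2.1 ≠ 1 → StepVia T.toTwoWayAut w (cfg s.1) (tr s.1) (cfg (s.1 + 1)))
    (hv2 : ∀ i < s.1, StepVia T.toTwoWayAut w (cfg i) (tr i) (cfg (i + 1))) :
    ∃ t, StepVia (mkS T).toTwoWayAut w (enc T cfg s) t (enc T cfg (nxt (fun i => tr i ∈ T.acc) s))
      ∧ (mkS T).out t = if s.2.1 = 2 then T.out (tr s.1) else [] := by
  obtain ⟨k, m, o⟩ := s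
  simp only at hv1 hv2
  have fw0 : ∀ q, (mkS T).fwd (q, 0) = T.fwd q := fun q => by simp [mkS]
  have fw1 : ∀ q, (mkS T).fwd (q, 1) = ¬ T.fwd q := fun q => by simp [mkS]
  have fw2 : ∀ q, (mkS T).fwd (q, 2) = T.fwd q := fun q => by simp [mkS]
  have key : ∀ k, StepVia T.toTwoWayAut w (cfg k) (tr k) (cfg (k + 1)) →
      ∃ a, tr k = ((cfg k).1, a, (cfg (k+1)).1) := by
    rintro k ⟨-, h1, h2, -⟩
    exact ⟨(tr k).2.1, by rw [← h1, ← h2]⟩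
  fin_cases m
  · have hv := hv1 (by simp)
    obtain ⟨a, ha⟩ := key k hv
    obtain ⟨g1, -, -, g4⟩ := hv
    rw [ha] at g1 g4
    by_cases hP : tr k ∈ T.acc
    · refine ⟨(((cfg k).1, 0), a, ((cfg k).1, 1)), ?_, by simp [mkS]⟩
      simp [nxt, hP, enc]
      rw [ha] at hP
      refine ⟨SD.sr g1 hP, rfl, rfl, ?_⟩
      simp only [fw0, fw1]
      simp only at g4
      grind
    · refine ⟨(((cfg k).1, 0), a, ((cfg (k+1)).1, 0)), ?_, by simp [mkS]⟩
      simp [nxt, hP, enc]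
      rw [ha] at hP
      refine ⟨SD.ss g1 hP, rfl, rfl, ?_⟩
      simp only [fw0, fw1]
      simpa only using g4
  · rcases Nat.eq_zero_or_pos k with rfl | hk
    · refine ⟨((T.init, 1), none, (T.init, 2)), ?_, by simp [mkS]⟩
      simp [nxt, enc, h0]
      refine ⟨SD.ri, rfl, rfl, ?_⟩
      simp only [fw1, fw2]
      have := T.init_fwd
      simp [this]
    · obtain ⟨k, rfl⟩ : ∃ k', k = k' + 1 := ⟨k - 1, by omega⟩
      have hv := hv2 k (by omega)
      obtain ⟨a, ha⟩ := key k hv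
      obtain ⟨g1, -, -, g4⟩ := hv
      rw [ha] at g1 g4
      have hmk := T.marker (cfg k).1 (cfg (k+1)).1
      by_cases hP : tr k ∈ T.acc
      · refine ⟨(((cfg (k+1)).1, 1), a, ((cfg (k+1)).1, 2)), ?_, by simp [mkS]⟩
        simp [nxt, hP, enc]
        rw [ha] at hP
        refine ⟨SD.ro g1 hP, rfl, rfl, ?_⟩
        simp only [fw2, fw1]
        simp only at g4
        grind
      · refine ⟨(((cfg (k+1)).1, 1), a, ((cfg k).1, 1)), ?_, by simp [mkS]⟩
        simp [nxt, hP, enc]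
        rw [ha] at hP
        refine ⟨SD.rr g1 hP, rfl, rfl, ?_⟩
        simp only [fw2, fw1]
        simp only at g4
        grind
  · have hv := hv1 (by simp)
    obtain ⟨a, ha⟩ := key k hv
    obtain ⟨g1, -, -, g4⟩ := hv
    rw [ha] at g1 g4
    by_cases hP : tr k ∈ T.acc
    · refine ⟨(((cfg k).1, 2), a, ((cfg (k+1)).1, 0)), ?_, by simp [mkS, ha]⟩
      simp [nxt, hP, enc]
      rw [ha] at hP
      refine ⟨SD.os g1 hP, rfl, rfl, ?_⟩
      simp only [fw0, fw2]
      simpa only using g4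
    · refine ⟨(((cfg k).1, 2), a, ((cfg (k+1)).1, 2)), ?_, by simp [mkS, ha]⟩
      simp [nxt, hP, enc]
      rw [ha] at hP
      refine ⟨SD.oo g1 hP, rfl, rfl, ?_⟩
      simp only [fw2]
      simpa only using g4

/-- A step of `mkS T` in a forward mode yields a step of `T`. -/
theorem step_of_mkS (T : BuchiTrans A B) (w : ℕ → A) (q : T.Q) (m : Fin 3) (hm : m ≠ 1) (i : ℕ)
    {t : (mkS T).Q × Option A × (mkS T).Q} {c' : (mkS T).Q × ℕ}
    (h : StepVia (mkS T).toTwoWayAut w ((q, m), i) t c') :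
    ∃ t' c'', StepVia T.toTwoWayAut w (q, i) t' c'' := by
  have hr := h.reads
  have hfw : (mkS T).fwd (q, m) = T.fwd q := by simp [mkS, hm]
  simp only at hr
  rw [hfw] at hr
  have : ∃ q', (q, t.2.1, q') ∈ T.Δ := by
    obtain ⟨h1, h2, -, -⟩ := h
    obtain ⟨t1, a, t2⟩ := t
    change SD T t1 a t2 at h1
    simp only at h2
    subst h2
    cases h1 with
    | ss h _ => exact ⟨_, h⟩
    | sr h _ => exact ⟨_, h⟩
    | oo h _ => exact ⟨_, h⟩
    | os h _ => exact ⟨_, h⟩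
    | rr h _ => exact absurd rfl hm
    | ro h _ => exact absurd rfl hm
    | ri => exact absurd rfl hm
  obtain ⟨q', hq'⟩ := this
  obtain ⟨c'', hc⟩ := Reads.step (M := T.toTwoWayAut) (c := (q, i)) hr hq'
  exact ⟨_, _, hc⟩

open Classical in
noncomputable def nextC (M : TwoWayAut A) (w : ℕ → A) (c : M.Q × ℕ) :
    (M.Q × Option A × M.Q) × (M.Q × ℕ) :=
  if h : ∃ r : (M.Q × Option A × M.Q) × (M.Q × ℕ), StepVia M w c r.1 r.2 then h.choose
  else ((c.1, none, c.1), c)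

theorem nextC_spec (M : TwoWayAut A) (w : ℕ → A) (c : M.Q × ℕ)
    (h : ∃ t c', StepVia M w c t c') : StepVia M w c (nextC M w c).1 (nextC M w c).2 := by
  have h' : ∃ r : (M.Q × Option A × M.Q) × (M.Q × ℕ), StepVia M w c r.1 r.2 := by
    obtain ⟨t, c', h⟩ := h
    exact ⟨(t, c'), h⟩
  unfold nextC
  rw [dif_pos h']
  exact h'.choose_spec

noncomputable def cfgOf (M : TwoWayAut A) (w : ℕ → A) : ℕ → M.Q × ℕ
  | 0 => (M.init, 0)
  | k + 1 => (nextC M w (cfgOf M w k)).2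

theorem realizes_iff (T : BuchiTrans A B) (hrev : Reversible T.toTwoWayAut)
    (hinit : ∀ p, (p, none, T.init) ∉ T.Δ) (w : ℕ → A) (x : ℕ → B) :
    (mkS T).Realizes w x ↔ T.Realizes w x := by
  constructor
  · rintro ⟨cfgS, trS, ⟨hS0, hS⟩, hwhole, hfl⟩
    set cfg := cfgOf T.toTwoWayAut w with hcfg
    set tr : ℕ → T.Q × Option A × T.Q := fun k => (nextC T.toTwoWayAut w (cfg k)).1 with htr
    set P : ℕ → Prop := fun i => tr i ∈ T.acc with hPdef
    have hval : ∀ k, (∃ t c', StepVia T.toTwoWayAut w (cfg k) t c') →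
        StepVia T.toTwoWayAut w (cfg k) (tr k) (cfg (k + 1)) := fun k h => nextC_spec _ w _ h
    have h0 : cfg 0 = (T.init, 0) := rfl
    have hdS := (mkS_rev T hrev hinit).1
    have hcur : ∀ j, cfgS j = enc T cfg (st P j) → (st P j).2.1 ≠ 1 →
        StepVia T.toTwoWayAut w (cfg (st P j).1) (tr (st P j).1) (cfg ((st P j).1 + 1)) := by
      intro j hj hm
      have := hS j
      rw [hj] at this
      exact hval _ (step_of_mkS T w _ _ hm _ this)
    have hinv : ∀ j, cfgS j = enc T cfg (st P j) ∧
        ∀ i < (st P j).1, StepVia T.toTwoWayAut w (cfg i) (tr i) (cfg (i + 1)) := by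
      intro j
      induction j with
      | zero =>
        refine ⟨?_, fun i hi => absurd hi (Nat.not_lt_zero i)⟩
        rw [hS0]; rfl
      | succ j ih =>
        obtain ⟨ih1, ih2⟩ := ih
        have hc := hcur j ih1
        obtain ⟨t, ht, -⟩ := enc_step T w cfg tr h0 (st P j) hc ih2
        have hSj := hS j
        rw [ih1] at hSj
        refine ⟨(stepVia_det hdS hSj ht).2, ?_⟩
        intro i hi
        by_cases hik : i < (st P j).1
        · exact ih2 i hik
        · have : i = (st P j).1 ∧ (st P j).2.1 ≠ 1 := by
            rw [st] at hi
            unfold nxt at hi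
            split_ifs at hi with a b c d e <;> simp at hi <;> (try omega) <;>
            refine ⟨by omega, ?_⟩ <;> simp_all
          rw [this.1]; exact hc this.2
    have hout : ∀ j, (mkS T).out (trS j) =
        if (st P j).2.1 = 2 then T.out (tr (st P j).1) else [] := by
      intro j
      obtain ⟨t, ht, hto⟩ := enc_step T w cfg tr h0 (st P j) (hcur j (hinv j).1) (hinv j).2
      have hSj := hS j
      rw [(hinv j).1] at hSj
      rw [(stepVia_det hdS hSj ht).1]
      exact hto
    have hcat := st_cat P (fun i => T.out (tr i)) (fun j => (mkS T).out (trS j)) hout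
    have hbd : ∀ N, ¬ ∀ j, (st P j).2.2 ≤ N := by
      intro N hN
      obtain ⟨j, hj⟩ := hfl.2 ((prefixCat (fun i => T.out (tr i)) N).length + 1)
      rw [hcat] at hj
      have := prefixCat_mono (fun i => T.out (tr i)) (hN j)
      omega
    have hallv : ∀ i, StepVia T.toTwoWayAut w (cfg i) (tr i) (cfg (i + 1)) := by
      intro i
      by_contra hne
      refine hbd i fun j => ?_
      have h1 := (inv_st P j).1
      have : ¬ i < (st P j).1 := fun h => hne ((hinv j).2 i h)
      omega
    have hacc : ∀ n, ∃ i, n ≤ i ∧ P i := by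
      intro n
      by_contra hne
      push Not at hne
      exact hbd n (st_bdd P n hne)
    refine ⟨cfg, tr, ⟨h0, hallv⟩, ?_, hacc, ?_, ?_⟩
    · intro n
      obtain ⟨j, hj⟩ := hwhole n
      rw [(hinv j).1] at hj
      exact ⟨_, hj⟩
    · intro n
      obtain ⟨j, hj⟩ := st_reach P hacc n
      have := hfl.1 j
      rw [hcat, hj] at this
      exact this
    · intro m
      obtain ⟨j, hj⟩ := hfl.2 m
      rw [hcat] at hj
      exact ⟨_, hj⟩
  · rintro ⟨cfg, tr, ⟨h0, hv⟩, hwhole, hacc, hfl⟩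
    set P : ℕ → Prop := fun i => tr i ∈ T.acc with hPdef
    have hstep := fun j => enc_step T w cfg tr h0 (st P j) (fun _ => hv _) (fun i _ => hv i)
    choose trS htr hout using hstep
    have hcat := st_cat P (fun i => T.out (tr i)) (fun j => (mkS T).out (trS j)) hout
    refine ⟨fun j => enc T cfg (st P j), trS, ⟨?_, htr⟩, ?_, ?_, ?_⟩
    · simp only [enc, st, h0]; rfl
    · intro n
      obtain ⟨i, hi⟩ := hwhole n
      obtain ⟨j, hj⟩ := st_reach P hacc i
      refine ⟨j, ?_⟩
      simp only [enc, hj]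
      exact hi
    · intro j
      rw [hcat]
      exact hfl.1 _
    · intro m
      obtain ⟨n, hn⟩ := hfl.2 m
      obtain ⟨j, hj⟩ := st_reach P hacc n
      refine ⟨j, ?_⟩
      rw [hcat, hj]
      exact hn

/-- Remove the transitions that go back to the initial configuration. -/
def trim (T : BuchiTrans A B) : BuchiTrans A B where
  Q := T.Q
  finQ := T.finQ
  fwd := T.fwd
  init := T.init
  init_fwd := T.init_fwd
  Δ := {t | t ∈ T.Δ ∧ t.2 ≠ (none, T.init)}
  marker := fun p q h => T.marker p q h.1
  acc := T.acc
  out := T.out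

theorem trim_realizes (T : BuchiTrans A B) (hrev : Reversible T.toTwoWayAut)
    (w : ℕ → A) (x : ℕ → B) : (trim T).Realizes w x ↔ T.Realizes w x := by
  constructor
  · rintro ⟨cfg, tr, ⟨h0, hv⟩, hw, ha, hf⟩
    exact ⟨cfg, tr, ⟨h0, fun i => ⟨(hv i).1.1, (hv i).2⟩⟩, hw, ha, hf⟩
  · rintro ⟨cfg, tr, ⟨h0, hv⟩, hw, ha, hf⟩
    refine ⟨cfg, tr, ⟨h0, fun i => ⟨⟨(hv i).1, fun hbad => ?_⟩, (hv i).2⟩⟩, hw, ha, hf⟩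
    have hret : cfg (i + 1) = cfg 0 := by
      obtain ⟨-, -, h3, h4⟩ := hv i
      rw [hbad] at h3 h4
      rw [h0]
      ext
      · exact h3.symm
      · simp at h4
        simp [h4]
    have hper : ∀ k, cfg (k + (i + 1)) = cfg k := by
      intro k
      induction k with
      | zero => simpa using hret
      | succ k ih =>
        have h1 := hv k
        have h2 := hv (k + (i + 1))
        rw [ih] at h2
        have := (stepVia_det hrev.1 h2 h1).2
        rw [← this]
        congr 1
        omega
    have hmod : ∀ k, ∃ k', k' < i + 1 ∧ cfg k = cfg k' := by
      intro k
      induction k using Nat.strong_induction_on with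
      | _ k ih =>
        by_cases hk : k < i + 1
        · exact ⟨k, hk, rfl⟩
        · obtain ⟨k', h1, h2⟩ := ih (k - (i + 1)) (by omega)
          refine ⟨k', h1, ?_⟩
          rw [← h2, ← hper (k - (i + 1)), Nat.sub_add_cancel (by omega)]
    obtain ⟨k, hk⟩ := hw ((∑ k ∈ Finset.range (i + 1), (cfg k).2) + 1)
    obtain ⟨k', h1, h2⟩ := hmod k
    rw [h2] at hk
    have := Finset.single_le_sum (f := fun k => (cfg k).2) (fun _ _ => Nat.zero_le _)
      (Finset.mem_range.mpr h1)
    omega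

end machine

/-- Every reversible two-way Büchi transducer `T` with `n` states is
equivalent to a reversible two-way transducer `S` with no acceptance condition and at most
`3n` states. -/
theorem buchi_to_noacc (A B : Type) [Fintype A] [Fintype B]
    (T : BuchiTrans A B) (n : ℕ)
    (hrev : Reversible T.toTwoWayAut) (hn : Fintype.card T.Q = n) :
    ∃ S : NoAccTrans A B,
      Reversible S.toTwoWayAut ∧
      Fintype.card S.Q ≤ 3 * n ∧
      (∀ w x, S.Realizes w x ↔ T.Realizes w x) := by
  have hrev' : Reversible (trim T).toTwoWayAut :=
    ⟨fun p a q q' h1 h2 => hrev.1 p a q q' h1.1 h2.1,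
     fun p p' a q h1 h2 => hrev.2 p p' a q h1.1 h2.1⟩
  have hinit : ∀ p, (p, none, (trim T).init) ∉ (trim T).Δ := fun p h => h.2 rfl
  refine ⟨mkS (trim T), mkS_rev _ hrev' hinit, ?_, fun w x => ?_⟩
  · have : Fintype.card (mkS (trim T)).Q = Fintype.card (T.Q × Fin 3) := rfl
    rw [this, Fintype.card_prod, hn, Fintype.card_fin]
    omega
  · rw [realizes_iff _ hrev' hinit, trim_realizes T hrev]

end Paper
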